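/- arXiv:1010.0379 — 2 statements merged into one kernel-verified Lean document; each statement's English description precedes it below -/
import Mathlib

section
/- Let T be a mass–momentum field on flat Newtonian spacetime satisfying the conservation condition and having slab-compact support. Then the angular momentum about any fixed point is conserved: for every p ∈ ℝ⁴, all indices a, b ∈ {0,1,2,3}, and all times t₁, t₂ ∈ ℝ, J^{ab}(t₁, p) = J^{ab}(t₂, p). -/
open MeasureTheory

noncomputable section

/-- Flat Newtonian spacetime ℝ⁴, coordinates x⁰,…,x³ with x⁰ time. -/
abbrev Spacetime : Type := Fin 4 → ℝ

/-- Space ℝ³. -/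
abbrev Space : Type := Fin 3 → ℝ

/-- The spacetime point with time `t` and spatial part `x`. -/
def pt (t : ℝ) (x : Space) : Spacetime := Fin.cons t x

/-- A mass–momentum field: smooth and symmetric. -/
def IsMassMomentum (T : Spacetime → Fin 4 → Fin 4 → ℝ) : Prop :=
  (∀ a b : Fin 4, ContDiff ℝ (⊤ : ℕ∞) fun p => T p a b) ∧
  (∀ p : Spacetime, ∀ a b : Fin 4, T p a b = T p b a)

/-- The conservation condition: ∑ₐ ∂ₐ T^{ab} = 0 everywhere. -/
def ConservationCond (T : Spacetime → Fin 4 → Fin 4 → ℝ) : Prop :=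
  ∀ (p : Spacetime) (b : Fin 4),
    ∑ a : Fin 4, fderiv ℝ (fun q => T q a b) p (Pi.single a 1) = 0

/-- Slab-compact support: supp T ∩ (K × ℝ³) is compact for compact K ⊆ ℝ. -/
def SlabCompact (T : Spacetime → Fin 4 → Fin 4 → ℝ) : Prop :=
  ∀ K : Set ℝ, IsCompact K → IsCompact (tsupport T ∩ {p : Spacetime | p 0 ∈ K})

/-- The angular momentum at time `t` relative to the point `p`:
J^{ab}(t,p) = ½ ∫_{ℝ³} [((t,x)−p)^a T^{b0}(t,x) − ((t,x)−p)^b T^{a0}(t,x)] dx. -/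
def angMomentum (T : Spacetime → Fin 4 → Fin 4 → ℝ) (t : ℝ) (p : Spacetime)
    (a b : Fin 4) : ℝ :=
  (1/2) * ∫ x : Space,
    ((pt t x - p) a * T (pt t x) b 0 - (pt t x - p) b * T (pt t x) a 0)

/-!
For fixed `p`, `a`, `b` the angular momentum density is the time component of the current
`M^c = (q - p)^a T^{cb} - (q - p)^b T^{ca}`. The product rule gives
`∑_c ∂_c M^c = T^{ab} - T^{ba} = 0`, by the conservation condition and the symmetry of `T`.

It therefore suffices to show that the total charge `∫ M^0(t, x) dx` of a divergence-free `C¹`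
current with slab-compact support does not depend on `t` (`charge_conserved`). On a bounded time
interval all the integrands live in one compact set of positions, so the integral may be
differentiated under the integral sign (`hasDerivAt_charge`); the derivative is
`∫ ∂_0 M^0 = -∑_i ∫ ∂_i M^i`, and each spatial term vanishes because it is the integral of a
derivative of a compactly supported function (`integral_spatial_deriv_eq_zero`).
-/

lemma continuous_pt : Continuous fun q : ℝ × Space => pt q.1 q.2 :=
  continuous_pi fun i => by
    refine Fin.cases ?_ (fun j => ?_) i
    · simpa [pt] using continuous_fst
    · simpa [pt, Function.comp_def] using (continuous_apply j).comp continuous_snd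

lemma pt_add_single (t : ℝ) (x : Space) (i : Fin 3) (s : ℝ) :
    pt t (x + s • Pi.single i 1) = pt t x + s • Pi.single i.succ (1 : ℝ) := by
  ext j
  refine Fin.cases ?_ (fun j => ?_) j
  · simp [pt]
  · simp [pt, Pi.single_apply]

lemma hasDerivAt_pt (t : ℝ) (x : Space) :
    HasDerivAt (fun s => pt s x) (Pi.single 0 1) t := by
  rw [hasDerivAt_pi]
  intro j
  refine Fin.cases ?_ (fun j => ?_) j
  · simpa [pt] using hasDerivAt_id' t
  · simpa [pt] using hasDerivAt_const t (x j)

/-- Over a compact set of times, a slab-compact set has all its positions in one compact set. -/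
lemma exists_compact_positions {S : Set Spacetime}
    (hS : ∀ K : Set ℝ, IsCompact K → IsCompact (S ∩ {p : Spacetime | p 0 ∈ K}))
    {K : Set ℝ} (hK : IsCompact K) :
    ∃ C : Set Space, IsCompact C ∧ ∀ t ∈ K, ∀ x, pt t x ∈ S → x ∈ C := by
  refine ⟨(fun p : Spacetime => fun i : Fin 3 => p i.succ) '' (S ∩ {p | p 0 ∈ K}),
    (hS K hK).image (by fun_prop), fun t ht x hx => ⟨pt t x, ⟨hx, ?_⟩, ?_⟩⟩
  · simpa [pt] using ht
  · ext i
    simp [pt]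

/-- A continuous function supported in a slab-compact set is integrable on each time slice. -/
lemma integrable_slice {S : Set Spacetime}
    (hS : ∀ K : Set ℝ, IsCompact K → IsCompact (S ∩ {p : Spacetime | p 0 ∈ K}))
    {f : Spacetime → ℝ} (hf : Continuous f) (hfS : ∀ q ∉ S, f q = 0) (t : ℝ) :
    Integrable fun x : Space => f (pt t x) := by
  obtain ⟨C, hC, hCS⟩ := exists_compact_positions hS (isCompact_singleton (x := t))
  refine (hf.comp (continuous_pt.comp (Continuous.prodMk_right t))).integrable_of_hasCompactSupport
    (HasCompactSupport.intro hC fun x hx => hfS _ fun h => hx (hCS t rfl x h))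

lemma continuous_partial {f : Spacetime → ℝ} (hf : ContDiff ℝ 1 f) (v : Spacetime) :
    Continuous fun q => fderiv ℝ f q v :=
  (hf.continuous_fderiv one_ne_zero).clm_apply continuous_const

lemma partial_eq_zero {S : Set Spacetime} {f : Spacetime → ℝ} (hfS : tsupport f ⊆ S)
    (v : Spacetime) : ∀ q ∉ S, fderiv ℝ f q v = 0 := fun q hq => by
  rw [fderiv_of_notMem_tsupport ℝ fun h => hq (hfS h)]
  rfl

/-- On a time slice, a spatial partial derivative of a function with slab-compact support
integrates to zero. -/
lemma integral_spatial_deriv_eq_zero {S : Set Spacetime}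
    (hS : ∀ K : Set ℝ, IsCompact K → IsCompact (S ∩ {p : Spacetime | p 0 ∈ K}))
    {f : Spacetime → ℝ} (hf : ContDiff ℝ 1 f) (hfS : tsupport f ⊆ S) (t : ℝ) (i : Fin 3) :
    ∫ x : Space, fderiv ℝ f (pt t x) (Pi.single i.succ 1) = 0 := by
  have h1 := integrable_slice hS hf.continuous
    (fun q hq => image_eq_zero_of_notMem_tsupport fun h => hq (hfS h)) t
  have h2 := integrable_slice hS (continuous_partial hf (Pi.single i.succ 1))
    (partial_eq_zero hfS _) t
  -- Integration by parts against the constant function `1`.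
  have := integral_bilinear_hasLineDerivAt_right_eq_neg_left_of_integrable
    (μ := (volume : Measure Space)) (f := fun _ => (1 : ℝ)) (f' := fun _ => 0)
    (g := fun x => f (pt t x)) (g' := fun x => fderiv ℝ f (pt t x) (Pi.single i.succ 1))
    (v := Pi.single i 1) (B := ContinuousLinearMap.mul ℝ ℝ)
    (by simp) (by simpa using h2) (by simpa using h1)
    (fun x _ => by simpa [HasLineDerivAt] using hasDerivAt_const (0 : ℝ) (1 : ℝ))
    (fun x _ => by
      have := ((hf.differentiable one_ne_zero) (pt t x)).hasFDerivAt.hasLineDerivAt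
        (Pi.single i.succ 1)
      simpa only [HasLineDerivAt, pt_add_single] using this)
  simpa using this

/-- Differentiation of a spatial integral in time. -/
lemma hasDerivAt_charge {S : Set Spacetime}
    (hS : ∀ K : Set ℝ, IsCompact K → IsCompact (S ∩ {p : Spacetime | p 0 ∈ K}))
    {f : Spacetime → ℝ} (hf : ContDiff ℝ 1 f) (hfS : tsupport f ⊆ S) (t : ℝ) :
    HasDerivAt (fun s => ∫ x : Space, f (pt s x))
      (∫ x : Space, fderiv ℝ f (pt t x) (Pi.single 0 1)) t := by
  have hK : IsCompact (Set.Icc (t - 1) (t + 1)) := isCompact_Icc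
  obtain ⟨C, hC, hCS⟩ := exists_compact_positions hS hK
  have hcont := continuous_partial hf (Pi.single 0 1)
  have hint := integrable_slice hS hf.continuous
    (fun q hq => image_eq_zero_of_notMem_tsupport fun h => hq (hfS h))
  obtain ⟨B, hB⟩ := (hK.prod hC).exists_bound_of_continuousOn
    (hcont.comp continuous_pt).continuousOn
  refine (hasDerivAt_integral_of_dominated_loc_of_deriv_le
    (s := Set.Icc (t - 1) (t + 1)) (bound := C.indicator fun _ => B)
    (F' := fun s x => fderiv ℝ f (pt s x) (Pi.single 0 1))
    (Icc_mem_nhds (by linarith) (by linarith))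
    (Filter.Eventually.of_forall fun s => (hint s).aestronglyMeasurable) (hint t)
    (integrable_slice hS hcont (partial_eq_zero hfS _) t).aestronglyMeasurable
    (Filter.Eventually.of_forall fun x s hs => ?_)
    ((integrable_indicator_iff hC.measurableSet).2
      (integrableOn_const hC.measure_lt_top.ne))
    (Filter.Eventually.of_forall fun x s _ => ?_)).2
  · by_cases hx : x ∈ C
    · simpa [hx] using hB (s, x) ⟨hs, hx⟩
    · have : pt s x ∉ S := fun h => hx (hCS s hs x h)
      simp [hx, partial_eq_zero hfS (Pi.single 0 1) _ this]
  · exact ((hf.differentiable one_ne_zero) (pt s x)).hasFDerivAt.comp_hasDerivAt s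
      (hasDerivAt_pt s x)

/-- The total charge of a divergence-free current with slab-compact support is conserved. -/
lemma charge_conserved {S : Set Spacetime}
    (hS : ∀ K : Set ℝ, IsCompact K → IsCompact (S ∩ {p : Spacetime | p 0 ∈ K}))
    {M : Fin 4 → Spacetime → ℝ} (hM : ∀ c, ContDiff ℝ 1 (M c)) (hMS : ∀ c, tsupport (M c) ⊆ S)
    (hdiv : ∀ q, ∑ c, fderiv ℝ (M c) q (Pi.single c 1) = 0) (t₁ t₂ : ℝ) :
    ∫ x : Space, M 0 (pt t₁ x) = ∫ x : Space, M 0 (pt t₂ x) := by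
  have hd := hasDerivAt_charge hS (hM 0) (hMS 0)
  refine is_const_of_deriv_eq_zero (fun t => (hd t).differentiableAt) (fun t => ?_) t₁ t₂
  rw [(hd t).deriv]
  have h : ∀ x : Space, fderiv ℝ (M 0) (pt t x) (Pi.single 0 1) =
      -∑ i : Fin 3, fderiv ℝ (M i.succ) (pt t x) (Pi.single i.succ 1) := fun x => by
    have := hdiv (pt t x)
    rw [Fin.sum_univ_succ] at this
    linarith
  simp_rw [h]
  rw [integral_neg, integral_finsetSum]
  · simp [integral_spatial_deriv_eq_zero hS (hM _) (hMS _) t]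
  · exact fun i _ => integrable_slice hS (continuous_partial (hM _) _)
      (partial_eq_zero (hMS _) _) t

/-- The current whose time component is the angular momentum density about `p`. -/
def angCurrent (T : Spacetime → Fin 4 → Fin 4 → ℝ) (p : Spacetime) (a b c : Fin 4)
    (q : Spacetime) : ℝ :=
  (q - p) a * T q c b - (q - p) b * T q c a

lemma contDiff_angCurrent {T : Spacetime → Fin 4 → Fin 4 → ℝ} (hT : IsMassMomentum T)
    (p : Spacetime) (a b c : Fin 4) : ContDiff ℝ 1 (angCurrent T p a b c) := by
  have h : ∀ d, ContDiff ℝ 1 fun q => T q c d := fun d => (hT.1 c d).of_le (by simp)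
  have h' : ∀ d, ContDiff ℝ 1 fun q : Spacetime => (q - p) d := fun d => by
    simp only [Pi.sub_apply]
    fun_prop
  exact ((h' a).mul (h b)).sub ((h' b).mul (h a))

lemma tsupport_angCurrent_subset (T : Spacetime → Fin 4 → Fin 4 → ℝ) (p : Spacetime)
    (a b c : Fin 4) : tsupport (angCurrent T p a b c) ⊆ tsupport T := by
  refine closure_mono fun q hq h => hq ?_
  simp [angCurrent, h]

/-- The product rule for one moment `(q - p)^a T^{cb}`, summed over `c`: by the conservation
condition only the term where the coordinate is differentiated survives. -/
lemma sum_fderiv_moment {T : Spacetime → Fin 4 → Fin 4 → ℝ} (hT : IsMassMomentum T)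
    (hcons : ConservationCond T) (p : Spacetime) (a b : Fin 4) (q : Spacetime) :
    ∑ c, fderiv ℝ (fun q : Spacetime => (q - p) a * T q c b) q (Pi.single c 1) = T q a b := by
  have h : ∀ c, fderiv ℝ (fun q : Spacetime => (q - p) a * T q c b) q (Pi.single c 1) =
      (q - p) a * fderiv ℝ (fun q => T q c b) q (Pi.single c 1)
        + T q c b * (Pi.single c 1 : Spacetime) a := fun c => by
    have h1 : HasFDerivAt (fun q : Spacetime => (q - p) a)
        (ContinuousLinearMap.proj (R := ℝ) (φ := fun _ : Fin 4 => ℝ) a) q :=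
      (hasFDerivAt_apply a q).sub_const (p a)
    have h2 := ((hT.1 c b).differentiable (by simp) q).hasFDerivAt
    have h3 : HasFDerivAt (fun q : Spacetime => (q - p) a * T q c b) _ q := h1.mul h2
    rw [h3.fderiv]
    simp
  simp_rw [h, Finset.sum_add_distrib, ← Finset.mul_sum, hcons q b]
  simp [Pi.single_apply]

lemma sum_fderiv_angCurrent {T : Spacetime → Fin 4 → Fin 4 → ℝ} (hT : IsMassMomentum T)
    (hcons : ConservationCond T) (p : Spacetime) (a b : Fin 4) (q : Spacetime) :
    ∑ c, fderiv ℝ (angCurrent T p a b c) q (Pi.single c 1) = 0 := by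
  have hd : ∀ a b c, DifferentiableAt ℝ (fun q : Spacetime => (q - p) a * T q c b) q :=
    fun a b c => by
      have := (hT.1 c b).differentiable (by simp) q
      simp only [Pi.sub_apply]
      fun_prop
  have h : ∀ c, fderiv ℝ (angCurrent T p a b c) q (Pi.single c 1) =
      fderiv ℝ (fun q : Spacetime => (q - p) a * T q c b) q (Pi.single c 1)
        - fderiv ℝ (fun q : Spacetime => (q - p) b * T q c a) q (Pi.single c 1) := fun c => by
    unfold angCurrent
    rw [fderiv_fun_sub (hd a b c) (hd b a c)]
    rfl
  simp_rw [h, Finset.sum_sub_distrib, sum_fderiv_moment hT hcons, hT.2 q a b, sub_self]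

/-- Conservation of angular momentum about any fixed point. -/
theorem angMomentum_conserved (T : Spacetime → Fin 4 → Fin 4 → ℝ)
    (hT : IsMassMomentum T) (hcons : ConservationCond T) (hsupp : SlabCompact T) :
    ∀ (p : Spacetime) (a b : Fin 4) (t₁ t₂ : ℝ),
      angMomentum T t₁ p a b = angMomentum T t₂ p a b := by
  intro p a b t₁ t₂
  have h := charge_conserved hsupp (fun c => contDiff_angCurrent hT p a b c)
    (fun c => tsupport_angCurrent_subset T p a b c) (sum_fderiv_angCurrent hT hcons p a b) t₁ t₂
  simp only [angCurrent] at h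
  unfold angMomentum
  simp_rw [hT.2 _ _ 0]
  rw [h]

end
end

section
/- Geometrized Poisson equation (curvature condition CC1): let φ : ℝ⁴ → ℝ be smooth and let Γ be the Newtonian connection associated with φ. Then its Ricci tensor satisfies R_{bd} = (Δφ) t_b t_d at every point, where Δφ = ∑_{i=1}^{3} ∂_i ∂_i φ is the spatial Laplacian. Consequently, for any smooth ρ : ℝ⁴ → ℝ, the Poisson equation Δφ = 4πρ holds everywhere if and only if the geometrized Poisson equation R_{bd} = 4πρ t_b t_d holds everywhere. -/
/-!
In `R_{bd} = ∑ₐ R^a_{bad}` with `Γ^a_{bc} = G^a t_b t_c` and `t` constant, differentiation acts only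
on `G`. Everything except the divergence of `G` drops out because `t_a G^a = 0` (each product
`t_a G^a` already vanishes, without summation): the quadratic terms contain the factor
`t_e G^e`, and the trace of `∂_d Γ^a_{ba}` is `∂_d (t_a G^a) t_b`. What is left is
`(∑ₐ ∂ₐ G^a) t_b t_d`, and the divergence of `G` is the spatial Laplacian of `φ`. The equivalence of
the two Poisson equations follows, the converse direction by taking the component `b = d = 0`.
-/

noncomputable section

/-- Partial derivative ∂ₐ f at p. -/
def pd (f : Spacetime → ℝ) (a : Fin 4) (p : Spacetime) : ℝ :=
  fderiv ℝ f p (Pi.single a 1)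

/-- The temporal covector tₐ = δₐ⁰. -/
def tcov (a : Fin 4) : ℝ := if a = 0 then 1 else 0

/-- The field G: G⁰ = 0 and Gⁱ = ∂ᵢφ for the spatial indices. -/
def Gfield (φ : Spacetime → ℝ) (p : Spacetime) (a : Fin 4) : ℝ :=
  if a = 0 then 0 else pd φ a p

/-- Christoffel symbols of the Newtonian connection: Γ^a_{bc} = G^a t_b t_c. -/
def Chr (φ : Spacetime → ℝ) (p : Spacetime) (a b c : Fin 4) : ℝ :=
  Gfield φ p a * tcov b * tcov c

/-- The Riemann curvature tensor of the Newtonian connection. -/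
def Riemann (φ : Spacetime → ℝ) (p : Spacetime) (a b c d : Fin 4) : ℝ :=
  pd (fun q => Chr φ q a b d) c p - pd (fun q => Chr φ q a b c) d p +
    ∑ e : Fin 4, (Chr φ p a c e * Chr φ p e b d - Chr φ p a d e * Chr φ p e b c)

/-- The Ricci tensor of the Newtonian connection: R_{bd} = ∑ₐ R^a_{bad}. -/
def Ricci (φ : Spacetime → ℝ) (p : Spacetime) (b d : Fin 4) : ℝ :=
  ∑ a : Fin 4, Riemann φ p a b a d

/-- The spatial Laplacian: Δφ = ∑ᵢ ∂ᵢ∂ᵢφ (sum over spatial indices). -/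
def spatialLaplacian (φ : Spacetime → ℝ) (p : Spacetime) : ℝ :=
  ∑ i : Fin 3, pd (fun q => pd φ i.succ q) i.succ p

/-- The derivative acts only on `G`, as `t` is constant. No differentiability is required: a nonzero
constant factor does not affect it, and for a zero factor both sides vanish. -/
lemma pd_Chr (φ : Spacetime → ℝ) (a b c d : Fin 4) (p : Spacetime) :
    pd (fun q => Chr φ q a b c) d p = pd (fun q => Gfield φ q a) d p * tcov b * tcov c := by
  have h : (fun q => Chr φ q a b c) = (tcov b * tcov c) • fun q => Gfield φ q a := by
    funext q
    simp only [Chr, Pi.smul_apply, smul_eq_mul]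
    ring
  simp only [pd, h, fderiv_const_smul_field, Pi.smul_apply,
    smul_apply, smul_eq_mul]
  ring

lemma Gfield_mul_tcov (φ : Spacetime → ℝ) (p : Spacetime) (a : Fin 4) :
    Gfield φ p a * tcov a = 0 := by
  by_cases h : a = 0 <;> simp [Gfield, tcov, h]

lemma pd_Gfield_mul_tcov (φ : Spacetime → ℝ) (p : Spacetime) (a d : Fin 4) :
    pd (fun q => Gfield φ q a) d p * tcov a = 0 := by
  by_cases h : a = 0 <;> simp [Gfield, tcov, h, pd]

/-- The divergence of `G` is the spatial Laplacian of `φ`. -/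
lemma sum_pd_Gfield (φ : Spacetime → ℝ) (p : Spacetime) :
    ∑ a : Fin 4, pd (fun q => Gfield φ q a) a p = spatialLaplacian φ p := by
  rw [Fin.sum_univ_succ]
  simp [Gfield, spatialLaplacian, pd, Fin.succ_ne_zero]

/-- Each summand of the quadratic curvature terms vanishes, as it contains the factor `G^e t_e`. -/
lemma Chr_mul_Chr (φ : Spacetime → ℝ) (p : Spacetime) (a b c d e : Fin 4) :
    Chr φ p a c e * Chr φ p e b d = 0 := by
  unfold Chr
  linear_combination Gfield φ p a * tcov c * tcov b * tcov d * Gfield_mul_tcov φ p e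

lemma Ricci_eq (φ : Spacetime → ℝ) (p : Spacetime) (b d : Fin 4) :
    Ricci φ p b d = spatialLaplacian φ p * tcov b * tcov d := by
  rw [← sum_pd_Gfield, Finset.sum_mul, Finset.sum_mul]
  refine Finset.sum_congr rfl fun a _ => ?_
  simp only [Riemann, pd_Chr, Chr_mul_Chr, sub_zero, Finset.sum_const_zero, add_zero]
  linear_combination -tcov b * pd_Gfield_mul_tcov φ p a d

/-- Geometrized Poisson equation: R_{bd} = (Δφ) t_b t_d, hence Δφ = 4πρ holds
iff R_{bd} = 4πρ t_b t_d holds. -/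
theorem geometrized_poisson (φ : Spacetime → ℝ) (hφ : ContDiff ℝ (⊤ : ℕ∞) φ) :
    (∀ (p : Spacetime) (b d : Fin 4),
      Ricci φ p b d = spatialLaplacian φ p * tcov b * tcov d) ∧
    (∀ ρ : Spacetime → ℝ, ContDiff ℝ (⊤ : ℕ∞) ρ →
      ((∀ p : Spacetime, spatialLaplacian φ p = 4 * Real.pi * ρ p) ↔
       (∀ (p : Spacetime) (b d : Fin 4),
         Ricci φ p b d = 4 * Real.pi * ρ p * tcov b * tcov d))) := by
  refine ⟨Ricci_eq φ, fun ρ _ => ⟨fun h p b d => by rw [Ricci_eq, h], fun h p => ?_⟩⟩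
  have h00 := h p 0 0
  rw [Ricci_eq] at h00
  simpa [tcov] using h00

end
end
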